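/- In the finite fully-branched C^{1+α} IFS setting with its dimension-δ Gibbs measure μ, if the Measure Non-Linearity condition (MNL) holds, then (QNL) holds: there exist ρ, Θ ∈ (0,1) and C_QNL > 0 such that for every interval I ⊂ ℝ and every n ≥ 1, Σ_{a,b,c,d∈𝒜ⁿ} μ(I_a)μ(I_b)μ(I_c)μ(I_d)·1_I(Δ_n((a,x_c),(b,x_d))) ≤ C_QNL(|I|^Θ + ρⁿ), where Δ_n((a,x),(b,y)) := (log|g_a'(x)| − log|g_b'(x)|) − (log|g_a'(y)| − log|g_b'(y)|) and x_a is a fixed reference point of I_a. -/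

import Mathlib

open MeasureTheory
open scoped ENNReal

noncomputable section

/-- The geometric part of a finite, fully-branched `C^{1+α}` iterated function system:
finitely many `C¹` contractions `g a` of a compact interval `J = [lo, hi]` with
`0 < κm ≤ |g_a'| ≤ κp < 1` and pairwise disjoint images. -/
structure FiniteIFS where
  A : Type
  finA : Finite A
  neA : Nonempty A
  lo : ℝ
  hi : ℝ
  hlohi : lo < hi
  g : A → ℝ → ℝ
  gd : A → ℝ → ℝ
  hderiv : ∀ a, ∀ x ∈ Set.Icc lo hi, HasDerivAt (g a) (gd a x) x
  hmaps : ∀ a, Set.MapsTo (g a) (Set.Icc lo hi) (Set.Icc lo hi)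
  κm : ℝ
  κp : ℝ
  hκm : 0 < κm
  hκp : κp < 1
  hcontr : ∀ a, ∀ x ∈ Set.Icc lo hi, κm ≤ |gd a x| ∧ |gd a x| ≤ κp
  hdisj : ∀ a b : A, a ≠ b → Disjoint (g a '' Set.Icc lo hi) (g b '' Set.Icc lo hi)

namespace FiniteIFS

variable (S : FiniteIFS)

/-- The ambient compact interval `J`. -/
def J : Set ℝ := Set.Icc S.lo S.hi

/-- The composition `g_{a₁} ∘ ⋯ ∘ g_{a_n}` along a word. -/
def gW : List S.A → ℝ → ℝ
  | [], x => x
  | a :: l, x => S.g a (gW l x)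

/-- The chain-rule derivative of `gW` along a word. -/
def gD : List S.A → ℝ → ℝ
  | [], _ => 1
  | a :: l, x => S.gd a (S.gW l x) * gD l x

/-- The cylinder interval `I_a = g_a(J)`. -/
def cyl (l : List S.A) : Set ℝ := S.gW l '' S.J

/-- The attractor `F = ⋂ₙ ⋃_{a∈𝒜ⁿ} I_a`. -/
def attract : Set ℝ := ⋂ n : ℕ, ⋃ a : Fin (n + 1) → S.A, S.cyl (List.ofFn a)

/-- The distortion fluctuation `X_a(x,y) = log|g_a'(x)| − log|g_a'(y)|`. -/
def X (l : List S.A) (x y : ℝ) : ℝ := Real.log |S.gD l x| - Real.log |S.gD l y|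

/-- The finite-scale temporal distance. -/
def Delta (a b : List S.A) (x y : ℝ) : ℝ := S.X a x y - S.X b x y

end FiniteIFS

/-- A finite fully-branched `C^{1+α}` IFS together with its dimension-`δ` Gibbs
(equilibrium) measure `μ` for the potential `δ·log|g'|`, where `δ = dim_H F`. -/
structure FiniteGibbsIFS extends FiniteIFS where
  refPt : List A → ℝ
  refPt_mem : ∀ l, refPt l ∈ toFiniteIFS.cyl l
  δ : ℝ
  hδ : δ ∈ Set.Ioo (0:ℝ) 1
  hdim : ENNReal.ofReal δ = dimH toFiniteIFS.attract
  Cstar : ℝ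
  hCstar : 1 ≤ Cstar
  hXHolder : ∀ l : List A, ∀ x ∈ Set.Icc lo hi, ∀ y ∈ Set.Icc lo hi,
    |toFiniteIFS.X l x y| ≤ Cstar * |x - y| ^ δ
  hmult : ∀ l l' : List A,
    Metric.diam (toFiniteIFS.cyl (l ++ l')) ≤
        Cstar * (Metric.diam (toFiniteIFS.cyl l) * Metric.diam (toFiniteIFS.cyl l')) ∧
      Metric.diam (toFiniteIFS.cyl l) * Metric.diam (toFiniteIFS.cyl l') ≤
        Cstar * Metric.diam (toFiniteIFS.cyl (l ++ l'))
  μ : Measure ℝ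
  hprob : IsProbabilityMeasure μ
  hsupp : μ (toFiniteIFS.attract)ᶜ = 0
  hfrostman : ∀ l : List A,
    (μ (toFiniteIFS.cyl l)).toReal ≤ Cstar * Metric.diam (toFiniteIFS.cyl l) ^ δ ∧
      Metric.diam (toFiniteIFS.cyl l) ^ δ ≤ Cstar * (μ (toFiniteIFS.cyl l)).toReal
  w : List A → ℝ → ℝ
  hw : ∀ l : List A, ∀ x ∈ Set.Icc lo hi,
    (μ (toFiniteIFS.cyl l)).toReal ≤ Cstar * w l x ∧
      w l x ≤ Cstar * (μ (toFiniteIFS.cyl l)).toReal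
  conformal : ∀ n : ℕ, ∀ f : ℝ → ℝ, Continuous f →
    ∫ x, f x ∂μ = ∑' a : Fin n → A,
      ∫ x, w (List.ofFn a) x * f (toFiniteIFS.gW (List.ofFn a) x) ∂μ

namespace FiniteGibbsIFS

variable (S : FiniteGibbsIFS)

abbrev J : Set ℝ := S.toFiniteIFS.J
abbrev gW : List S.A → ℝ → ℝ := S.toFiniteIFS.gW
abbrev gD : List S.A → ℝ → ℝ := S.toFiniteIFS.gD
abbrev cyl : List S.A → Set ℝ := S.toFiniteIFS.cyl
abbrev attract : Set ℝ := S.toFiniteIFS.attract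
abbrev X : List S.A → ℝ → ℝ → ℝ := S.toFiniteIFS.X
abbrev Delta : List S.A → List S.A → ℝ → ℝ → ℝ := S.toFiniteIFS.Delta

/-- The Measure Non-Linearity condition (MNL): for every `N ≥ 1` there are words
`a, b ∈ 𝒜^N` such that the pushforward of `μ` under `X_a(·,x₀) - X_b(·,x₀)` is
absolutely non-concentrated: it gives mass at most `C_MNL |I|` to every interval `I`,
uniformly in `x₀ ∈ F`. -/
def MNL (CM : ℝ) : Prop :=
  ∀ N : ℕ, 1 ≤ N → ∃ a b : Fin N → S.A,
    ∀ x₀ ∈ S.attract, ∀ u v : ℝ, u ≤ v →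
      S.μ {x : ℝ | x ∈ S.attract ∧
          S.X (List.ofFn a) x x₀ - S.X (List.ofFn b) x x₀ ∈ Set.Icc u v}
        ≤ ENNReal.ofReal (CM * (v - u))

end FiniteGibbsIFS

end

/-- The finite set of words of length `n` over a finite alphabet. -/
noncomputable def words (A : Type) [Finite A] (n : ℕ) : Finset (List A) :=
  (List.finite_length_eq A n).toFinset

/-- The total `q`-weight of the words in `T` extending `d` by `r` letters. -/
noncomputable def mass {A : Type} [Finite A] (q : List A → ℝ) (T : Set (List A)) (d : List A)
    (r : ℕ) : ℝ :=
  ∑ t ∈ words A r, T.indicator q (d ++ t)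

/-- The words `l` and `l'` first part ways by following `e` and `f` after a common prefix of
length at most `L`. -/
def Diverge {A : Type} (e f : List A) (L : ℕ) (l l' : List A) : Prop :=
  ∃ c s s' : List A, c.length ≤ L ∧
    ((l = c ++ (e ++ s) ∧ l' = c ++ (f ++ s')) ∨ (l = c ++ (f ++ s) ∧ l' = c ++ (e ++ s')))

theorem Diverge.symm {A : Type} {e f l l' : List A} {L : ℕ} (h : Diverge e f L l l') :
    Diverge e f L l' l := by
  obtain ⟨c, s, s', hc, h | h⟩ := h
  · exact ⟨c, s', s, hc, Or.inr ⟨h.2, h.1⟩⟩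
  · exact ⟨c, s', s, hc, Or.inl ⟨h.2, h.1⟩⟩

section Trees

variable {A : Type} [Finite A]

@[simp]
theorem mem_words {n : ℕ} {l : List A} : l ∈ words A n ↔ l.length = n := by
  simp [words]

theorem sum_words_add (f : List A → ℝ) (m n : ℕ) :
    ∑ l ∈ words A (m + n), f l = ∑ z ∈ words A m, ∑ t ∈ words A n, f (z ++ t) := by
  rw [← Finset.sum_product']
  refine Finset.sum_nbij' (fun l => (l.take m, l.drop m)) (fun x => x.1 ++ x.2) ?_ ?_ ?_ ?_ ?_
  · intro l hl
    rw [mem_words] at hl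
    simp [hl]
  · rintro ⟨z, t⟩ h
    simp_all
  · intro l _
    simp
  · rintro ⟨z, t⟩ h
    simp only [Finset.mem_product, mem_words] at h
    simp [← h.1]
  · intro l _
    simp

theorem sum_words_reverse (f : List A → ℝ) (n : ℕ) :
    ∑ l ∈ words A n, f l.reverse = ∑ l ∈ words A n, f l :=
  Finset.sum_nbij' List.reverse List.reverse (by simp) (by simp) (by simp) (by simp) (by simp)

theorem sum_words_eq_sum_ofFn {M : Type*} [AddCommMonoid M] [Fintype A] (f : List A → M) (n : ℕ) :
    ∑ l ∈ words A n, f l = ∑ a : Fin n → A, f (List.ofFn a) := by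
  symm
  refine Finset.sum_bij (fun a _ => List.ofFn a) (by simp)
    (fun a _ b _ h => List.ofFn_injective h) ?_ (by simp)
  intro l hl
  rw [mem_words] at hl
  subst hl
  exact ⟨l.get, Finset.mem_univ _, List.ofFn_get l⟩

theorem mass_add (q : List A → ℝ) (T : Set (List A)) (d : List A) (m r : ℕ) :
    mass q T d (m + r) = ∑ z ∈ words A m, mass q T (d ++ z) r := by
  simp [mass, sum_words_add]

theorem mass_nonneg {q : List A → ℝ} (hq : ∀ l, 0 ≤ q l) (T : Set (List A)) (d : List A) (r : ℕ) :
    0 ≤ mass q T d r :=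
  Finset.sum_nonneg fun _ _ => Set.indicator_nonneg (fun _ _ => hq _) _

theorem mass_mono {q : List A → ℝ} (hq : ∀ l, 0 ≤ q l) {T T' : Set (List A)} (h : T ⊆ T')
    (d : List A) (r : ℕ) : mass q T d r ≤ mass q T' d r :=
  Finset.sum_le_sum fun _ _ => Set.indicator_le_indicator_of_subset h hq _

theorem mass_eq_zero {q : List A → ℝ} {T : Set (List A)} {d : List A} {r : ℕ}
    (h : ∀ t ∈ words A r, d ++ t ∉ T) : mass q T d r = 0 :=
  Finset.sum_eq_zero fun t ht => Set.indicator_of_notMem (h t ht) _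

/-- For a quasi-multiplicative weight, every child of a node carries a definite proportion of the
mass of that node. -/
theorem mul_mass_le_mass_append {q : List A → ℝ} {K ε : ℝ} {N : ℕ} (hK : 0 < K)
    (hq : ∀ l, 0 ≤ q l) (hle : ∀ l l', q (l ++ l') ≤ K * (q l * q l'))
    (hge : ∀ l l', q l * q l' ≤ K * q (l ++ l')) (hε : ∀ z ∈ words A N, ε ≤ q z) (hε0 : 0 ≤ ε)
    (hsum : ∑ z ∈ words A N, q z ≤ 1) (d : List A) (r : ℕ) {z : List A} (hz : z ∈ words A N) :
    ε / K ^ 4 * mass q Set.univ d (N + r) ≤ mass q Set.univ (d ++ z) r := by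
  set Q := ∑ t ∈ words A r, q t with hQ
  have hQ0 : 0 ≤ Q := Finset.sum_nonneg fun _ _ => hq _
  have h1 : mass q Set.univ d (N + r) ≤ K ^ 2 * (q d * Q) := by
    calc mass q Set.univ d (N + r)
        = ∑ z ∈ words A N, ∑ t ∈ words A r, q (d ++ (z ++ t)) := by
          simp [mass, sum_words_add]
      _ ≤ ∑ z ∈ words A N, ∑ t ∈ words A r, K ^ 2 * q d * (q z * q t) := by
          refine Finset.sum_le_sum fun z _ => Finset.sum_le_sum fun t _ => ?_
          have a1 := hle d (z ++ t)
          have a2 := hle z t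
          have a3 := mul_le_mul_of_nonneg_left a2 (mul_nonneg hK.le (hq d))
          nlinarith
      _ = K ^ 2 * (q d * Q) * ∑ z ∈ words A N, q z := by
          rw [hQ]
          simp only [Finset.mul_sum, Finset.sum_mul]
          refine Finset.sum_congr rfl fun z _ => Finset.sum_congr rfl fun t _ => ?_
          ring
      _ ≤ K ^ 2 * (q d * Q) * 1 := by
          have := hq d
          gcongr
      _ = _ := mul_one _
  have h2 : ε * (q d * Q) ≤ K ^ 2 * mass q Set.univ (d ++ z) r := by
    calc ε * (q d * Q) = ∑ t ∈ words A r, ε * (q d * q t) := by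
          rw [hQ]; simp only [Finset.mul_sum]
      _ ≤ ∑ t ∈ words A r, K ^ 2 * q ((d ++ z) ++ t) := by
          refine Finset.sum_le_sum fun t _ => ?_
          have a1 := hge (d ++ z) t
          have a2 := hge d z
          have a3 := mul_le_mul_of_nonneg_right a2 (hq t)
          have a4 := mul_le_mul_of_nonneg_left a1 hK.le
          have a5 := mul_le_mul_of_nonneg_right (hε z hz) (mul_nonneg (hq d) (hq t))
          nlinarith
      _ = _ := by simp [mass, Finset.mul_sum]
  rw [div_mul_eq_mul_div, div_le_iff₀ (by positivity)]
  nlinarith [mul_le_mul_of_nonneg_left h1 hε0, mul_le_mul_of_nonneg_left h2 (sq_nonneg K)]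

/-- A set of words that misses a child of every short node has exponentially small mass. -/
theorem mass_le_of_missing_child {q : List A → ℝ} {T : Set (List A)} {N L : ℕ} {p : ℝ}
    (hq : ∀ l, 0 ≤ q l) (hp1 : p ≤ 1)
    (hchild : ∀ d r, ∀ z ∈ words A N, p * mass q Set.univ d (N + r) ≤ mass q Set.univ (d ++ z) r)
    (hmiss : ∀ d : List A, d.length ≤ L → ∀ r, ∃ z ∈ words A N, ∀ t ∈ words A r, d ++ z ++ t ∉ T)
    (r : ℕ) : ∀ (k : ℕ) (d : List A), d.length + k * N ≤ L →
      mass q T d (k * N + r) ≤ (1 - p) ^ k * mass q Set.univ d (k * N + r) := by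
  classical
  intro k
  induction k with
  | zero =>
    intro d _
    simpa using mass_mono hq (Set.subset_univ T) d (0 * N + r)
  | succ k ih =>
    intro d hd
    have hlen : (k + 1) * N + r = N + (k * N + r) := by ring
    rw [hlen]
    obtain ⟨z₀, hz₀, hz₀T⟩ := hmiss d (by nlinarith) (k * N + r)
    have hz := hchild d (k * N + r) z₀ hz₀
    have hpk : 0 ≤ (1 - p) ^ k := pow_nonneg (by linarith) k
    calc mass q T d (N + (k * N + r))
        = ∑ z ∈ (words A N).erase z₀, mass q T (d ++ z) (k * N + r) := by
          rw [mass_add, ← Finset.add_sum_erase _ _ hz₀, mass_eq_zero hz₀T, zero_add]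
      _ ≤ ∑ z ∈ (words A N).erase z₀, (1 - p) ^ k * mass q Set.univ (d ++ z) (k * N + r) := by
          refine Finset.sum_le_sum fun z hz => ih (d ++ z) ?_
          have := mem_words.1 (Finset.mem_of_mem_erase hz)
          rw [List.length_append, this]
          linarith
      _ = (1 - p) ^ k * (mass q Set.univ d (N + (k * N + r))
            - mass q Set.univ (d ++ z₀) (k * N + r)) := by
          rw [← Finset.mul_sum, mass_add _ _ _ N, ← Finset.add_sum_erase _ _ hz₀]
          ring
      _ ≤ (1 - p) ^ (k + 1) * mass q Set.univ d (N + (k * N + r)) := by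
          rw [pow_succ, mul_assoc]
          refine mul_le_mul_of_nonneg_left ?_ hpk
          linarith

/-- A set of words that is not exponentially small contains exponentially many words which pairwise
diverge along `e` and `f`. -/
theorem exists_diverging_family {q : List A → ℝ} {T : Set (List A)} {N : ℕ} {p : ℝ} {e f : List A}
    (hq : ∀ l, 0 ≤ q l) (hp0 : 0 ≤ p) (hp1 : p ≤ 1)
    (hchild : ∀ d r, ∀ z ∈ words A N, p * mass q Set.univ d (N + r) ≤ mass q Set.univ (d ++ z) r)
    (he : e ∈ words A N) (hf : f ∈ words A N) (hef : e ≠ f) (r : ℕ) :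
    ∀ (k : ℕ) (d : List A), ∃ G : Finset (List A),
      (∀ l ∈ G, l ∈ T ∧ ∃ t ∈ words A (k * N + r), l = d ++ t) ∧
      (∀ l ∈ G, ∀ l' ∈ G, l ≠ l' → Diverge e f (d.length + k * N) l l') ∧
      mass q T d (k * N + r) ≤ G.card * ((1 - p) ^ k * mass q Set.univ d (k * N + r)) := by
  classical
  intro k
  induction k with
  | zero =>
    intro d
    by_cases h : ∃ t ∈ words A r, d ++ t ∈ T
    · obtain ⟨t, ht, htT⟩ := h
      refine ⟨{d ++ t}, ?_, ?_, ?_⟩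
      · intro l hl
        rw [Finset.mem_singleton] at hl
        exact ⟨hl ▸ htT, t, by simpa using ht, hl⟩
      · intro l hl l' hl' hne
        rw [Finset.mem_singleton] at hl hl'
        exact absurd (hl.trans hl'.symm) hne
      · simpa using mass_mono hq (Set.subset_univ T) d (0 * N + r)
    · push Not at h
      refine ⟨∅, by simp, by simp, ?_⟩
      rw [zero_mul, zero_add, mass_eq_zero h]
      simp
  | succ k ih =>
    intro d
    have hlen : (k + 1) * N + r = N + (k * N + r) := by ring
    rw [hlen]
    choose G hG hGd hGm using fun z => ih (d ++ z)
    have hpk : 0 ≤ (1 - p) ^ k := pow_nonneg (by linarith) k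
    set U : List A → ℝ := fun z => mass q Set.univ (d ++ z) (k * N + r) with hU
    have hU0 : ∀ z, 0 ≤ U z := fun z => mass_nonneg hq _ _ _
    set V := mass q Set.univ d (N + (k * N + r)) with hV
    have hUV : V = ∑ z ∈ words A N, U z := mass_add _ _ _ _ _
    have key : ∀ M : ℕ, (∀ z ∈ words A N, (G z).card ≤ M) → (G e).card + (G f).card ≤ M →
        mass q T d (N + (k * N + r)) ≤ M * ((1 - p) ^ (k + 1) * V) := by
      intro M hM hM2
      have hM' : ∀ z ∈ words A N, ((G z).card : ℝ) ≤ M := fun z hz => by exact_mod_cast hM z hz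
      have hM2' : ((G e).card : ℝ) + (G f).card ≤ M := by exact_mod_cast hM2
      have h1 : mass q T d (N + (k * N + r)) ≤ (1 - p) ^ k * ∑ z ∈ words A N, (G z).card * U z := by
        rw [mass_add, Finset.mul_sum]
        refine Finset.sum_le_sum fun z _ => (hGm z).trans_eq ?_
        simp only [hU]
        ring
      have h2 : ∑ z ∈ ({e, f} : Finset (List A)), ((M : ℝ) - (G z).card) * U z
          ≤ ∑ z ∈ words A N, ((M : ℝ) - (G z).card) * U z := by
        refine Finset.sum_le_sum_of_subset_of_nonneg ?_ ?_
        · intro z hz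
          rw [Finset.mem_insert, Finset.mem_singleton] at hz
          rcases hz with rfl | rfl <;> assumption
        · intro z hz _
          exact mul_nonneg (sub_nonneg.2 (hM' z hz)) (hU0 z)
      rw [Finset.sum_pair hef] at h2
      have h3 : ∑ z ∈ words A N, ((M : ℝ) - (G z).card) * U z
          = M * V - ∑ z ∈ words A N, (G z).card * U z := by
        rw [hUV, Finset.mul_sum, ← Finset.sum_sub_distrib]
        exact Finset.sum_congr rfl fun z _ => by ring
      have h4 := mul_le_mul_of_nonneg_left (hchild d (k * N + r) e he) (sub_nonneg.2 (hM' e he))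
      have h5 := mul_le_mul_of_nonneg_left (hchild d (k * N + r) f hf) (sub_nonneg.2 (hM' f hf))
      have hpV : 0 ≤ p * V := mul_nonneg hp0 (mass_nonneg hq _ _ _)
      have h6 := mul_le_mul_of_nonneg_right hM2' hpV
      refine h1.trans ?_
      rw [pow_succ, mul_left_comm, mul_assoc, mul_left_comm]
      refine (mul_le_mul_of_nonneg_left ?_ hpk).trans_eq (mul_left_comm _ _ _)
      simp only [hU] at *
      linarith
    have hlenz : ∀ z ∈ words A N, (d ++ z).length + k * N = d.length + (k + 1) * N := by
      intro z hz
      rw [List.length_append, mem_words.1 hz]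
      ring
    have hext : ∀ z ∈ words A N, ∀ l ∈ G z,
        l ∈ T ∧ ∃ t ∈ words A (N + (k * N + r)), l = d ++ t := by
      intro z hz l hl
      obtain ⟨h1, t, ht, rfl⟩ := hG z l hl
      refine ⟨h1, z ++ t, ?_, by simp⟩
      rw [mem_words] at *
      rw [List.length_append, hz, ht]
    obtain ⟨g, hg, hgmax⟩ := Finset.exists_max_image (words A N) (fun z => (G z).card) ⟨e, he⟩
    by_cases hcase : (G e).card + (G f).card ≤ (G g).card
    · refine ⟨G g, hext g hg, ?_, key _ hgmax hcase⟩
      intro l hl l' hl' hne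
      exact hlenz g hg ▸ hGd g l hl l' hl' hne
    · have hcross : ∀ l ∈ G e, ∀ l' ∈ G f, Diverge e f (d.length + (k + 1) * N) l l' := by
        intro l hl l' hl'
        obtain ⟨-, t, -, rfl⟩ := hG e l hl
        obtain ⟨-, t', -, rfl⟩ := hG f l' hl'
        exact ⟨d, t, t', by omega, Or.inl ⟨by simp, by simp⟩⟩
      have hdisj : Disjoint (G e) (G f) := by
        rw [Finset.disjoint_left]
        intro l hl hl'
        obtain ⟨-, t, -, h⟩ := hG e l hl
        obtain ⟨-, t', -, h'⟩ := hG f l hl'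
        rw [h, List.append_assoc, List.append_assoc] at h'
        exact hef (List.append_inj (List.append_cancel_left h')
          ((mem_words.1 he).trans (mem_words.1 hf).symm)).1
      have hcard := Finset.card_union_of_disjoint hdisj
      refine ⟨G e ∪ G f, ?_, ?_, key _ ?_ hcard.ge⟩
      · intro l hl
        rcases Finset.mem_union.1 hl with hl | hl
        exacts [hext e he l hl, hext f hf l hl]
      · intro l hl l' hl' hne
        rcases Finset.mem_union.1 hl with hl | hl <;> rcases Finset.mem_union.1 hl' with hl' | hl'
        · exact hlenz e he ▸ hGd e l hl l' hl' hne
        · exact hcross l hl l' hl'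
        · exact (hcross l' hl' l hl).symm
        · exact hlenz f hf ▸ hGd f l hl l' hl' hne
      · intro z hz
        have := hgmax z hz
        omega

end Trees

namespace FiniteIFS

variable (S : FiniteIFS)

theorem gW_mem (l : List S.A) {x : ℝ} (hx : x ∈ Set.Icc S.lo S.hi) :
    S.gW l x ∈ Set.Icc S.lo S.hi := by
  induction l with
  | nil => exact hx
  | cons a l ih => exact S.hmaps a ih

theorem gW_append (l l' : List S.A) (x : ℝ) : S.gW (l ++ l') x = S.gW l (S.gW l' x) := by
  induction l with
  | nil => rfl
  | cons a l ih => simp [gW, ih]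

theorem gD_append (l l' : List S.A) (x : ℝ) :
    S.gD (l ++ l') x = S.gD l (S.gW l' x) * S.gD l' x := by
  induction l with
  | nil => simp [gD]
  | cons a l ih => simp [gD, ih, gW_append, mul_assoc]

theorem gD_ne_zero (l : List S.A) {x : ℝ} (hx : x ∈ Set.Icc S.lo S.hi) : S.gD l x ≠ 0 := by
  induction l with
  | nil => simp [gD]
  | cons a l ih =>
    refine mul_ne_zero (fun h => ?_) ih
    have := (S.hcontr a _ (S.gW_mem l hx)).1
    rw [h, abs_zero] at this
    exact absurd S.hκm (not_lt.2 this)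

theorem X_append (l l' : List S.A) {x y : ℝ} (hx : x ∈ Set.Icc S.lo S.hi)
    (hy : y ∈ Set.Icc S.lo S.hi) :
    S.X (l ++ l') x y = S.X l (S.gW l' x) (S.gW l' y) + S.X l' x y := by
  have h : ∀ z ∈ Set.Icc S.lo S.hi, Real.log |S.gD (l ++ l') z|
      = Real.log |S.gD l (S.gW l' z)| + Real.log |S.gD l' z| := by
    intro z hz
    rw [gD_append, abs_mul, Real.log_mul (abs_ne_zero.2 (S.gD_ne_zero l (S.gW_mem l' hz)))
      (abs_ne_zero.2 (S.gD_ne_zero l' hz))]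
  rw [X, X, X, h x hx, h y hy]
  ring

theorem abs_g_sub (a : S.A) {x y : ℝ} (hx : x ∈ Set.Icc S.lo S.hi) (hy : y ∈ Set.Icc S.lo S.hi) :
    S.κm * |x - y| ≤ |S.g a x - S.g a y| ∧ |S.g a x - S.g a y| ≤ S.κp * |x - y| := by
  wlog hxy : x < y generalizing x y
  · rcases (not_lt.1 hxy).eq_or_lt with h | h
    · simp [h]
    · rw [abs_sub_comm x y, abs_sub_comm (S.g a x)]
      exact this hy hx h
  have hsub : Set.Icc x y ⊆ Set.Icc S.lo S.hi := Set.Icc_subset_Icc hx.1 hy.2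
  obtain ⟨c, hc, hcs⟩ := exists_hasDerivAt_eq_slope (S.g a) (S.gd a) hxy
    (fun z hz => (S.hderiv a z (hsub hz)).continuousAt.continuousWithinAt)
    (fun z hz => S.hderiv a z (hsub (Set.Ioo_subset_Icc_self hz)))
  have hne : y - x ≠ 0 := sub_ne_zero.2 hxy.ne'
  have h : |S.g a x - S.g a y| = |S.gd a c| * |x - y| := by
    rw [hcs, abs_sub_comm, abs_sub_comm x y, ← abs_mul, div_mul_cancel₀ _ hne]
  have hb := S.hcontr a c (hsub (Set.Ioo_subset_Icc_self hc))
  rw [h]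
  exact ⟨by gcongr; exact hb.1, by gcongr; exact hb.2⟩

theorem κp_pos : 0 < S.κp := by
  obtain ⟨a⟩ := S.neA
  have h := S.hcontr a S.lo ⟨le_rfl, S.hlohi.le⟩
  exact S.hκm.trans_le (h.1.trans h.2)

theorem κm_lt_one : S.κm < 1 := by
  obtain ⟨a⟩ := S.neA
  have h := S.hcontr a S.lo ⟨le_rfl, S.hlohi.le⟩
  exact (h.1.trans h.2).trans_lt S.hκp

theorem abs_gW_sub (l : List S.A) {x y : ℝ} (hx : x ∈ Set.Icc S.lo S.hi)
    (hy : y ∈ Set.Icc S.lo S.hi) :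
    S.κm ^ l.length * |x - y| ≤ |S.gW l x - S.gW l y| ∧
      |S.gW l x - S.gW l y| ≤ S.κp ^ l.length * |x - y| := by
  induction l with
  | nil => simp [gW]
  | cons a l ih =>
    have h := S.abs_g_sub a (S.gW_mem l hx) (S.gW_mem l hy)
    have h1 := mul_le_mul_of_nonneg_left ih.1 S.hκm.le
    have h2 := mul_le_mul_of_nonneg_left ih.2 S.κp_pos.le
    simp only [gW, List.length_cons, pow_succ']
    constructor <;> linarith [h.1, h.2]

theorem cyl_subset (l : List S.A) : S.cyl l ⊆ Set.Icc S.lo S.hi := by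
  rintro _ ⟨x, hx, rfl⟩
  exact S.gW_mem l hx

theorem cyl_append_subset (l l' : List S.A) : S.cyl (l ++ l') ⊆ S.cyl l := by
  rintro _ ⟨x, hx, rfl⟩
  exact ⟨S.gW l' x, S.gW_mem l' hx, (S.gW_append l l' x).symm⟩

theorem gW_mem_cyl_append (l : List S.A) {l' : List S.A} {x : ℝ} (hx : x ∈ S.cyl l') :
    S.gW l x ∈ S.cyl (l ++ l') := by
  obtain ⟨t, ht, rfl⟩ := hx
  exact ⟨t, ht, S.gW_append l l' t⟩

theorem abs_sub_le_diam {l : List S.A} {x y : ℝ} (hx : x ∈ S.cyl l) (hy : y ∈ S.cyl l) :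
    |x - y| ≤ Metric.diam (S.cyl l) :=
  Metric.dist_le_diam_of_mem (Metric.isBounded_Icc _ _ |>.subset (S.cyl_subset l)) hx hy

theorem diam_cyl_le (l : List S.A) :
    Metric.diam (S.cyl l) ≤ S.κp ^ l.length * (S.hi - S.lo) := by
  have h0 : 0 ≤ S.κp ^ l.length := pow_nonneg S.κp_pos.le _
  refine Metric.diam_le_of_forall_dist_le (mul_nonneg h0 (sub_nonneg.2 S.hlohi.le)) ?_
  rintro _ ⟨x, hx, rfl⟩ _ ⟨y, hy, rfl⟩
  refine (S.abs_gW_sub l hx hy).2.trans (mul_le_mul_of_nonneg_left ?_ h0)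
  exact abs_sub_le_of_le_of_le hx.1 hx.2 hy.1 hy.2

theorem le_diam_cyl (l : List S.A) :
    S.κm ^ l.length * (S.hi - S.lo) ≤ Metric.diam (S.cyl l) := by
  have hlo : S.lo ∈ Set.Icc S.lo S.hi := ⟨le_rfl, S.hlohi.le⟩
  have hhi : S.hi ∈ Set.Icc S.lo S.hi := ⟨S.hlohi.le, le_rfl⟩
  have h := (S.abs_gW_sub l hhi hlo).1
  rw [abs_of_pos (sub_pos.2 S.hlohi)] at h
  exact h.trans (S.abs_sub_le_diam ⟨_, hhi, rfl⟩ ⟨_, hlo, rfl⟩)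

theorem diam_cyl_pos (l : List S.A) : 0 < Metric.diam (S.cyl l) :=
  (mul_pos (pow_pos S.hκm _) (sub_pos.2 S.hlohi)).trans_le (S.le_diam_cyl l)

theorem eq_of_mem_cyl {l l' : List S.A} (hlen : l.length = l'.length) {x : ℝ}
    (hx : x ∈ S.cyl l) (hx' : x ∈ S.cyl l') : l = l' := by
  induction l generalizing l' x with
  | nil => exact (List.length_eq_zero_iff.1 hlen.symm).symm
  | cons a l ih =>
    match l', hlen with
    | b :: l', hlen =>
      obtain ⟨t, ht, rfl⟩ := hx
      obtain ⟨t', ht', h⟩ := hx'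
      simp only [gW] at h
      have hab : a = b := by
        by_contra hab
        exact Set.disjoint_left.1 (S.hdisj a b hab) ⟨_, S.gW_mem l ht, rfl⟩
          ⟨_, S.gW_mem l' ht', h⟩
      subst hab
      have hinj := (S.abs_g_sub a (S.gW_mem l' ht') (S.gW_mem l ht)).1
      rw [h, sub_self, abs_zero] at hinj
      have h0 : S.gW l' t' = S.gW l t := by
        rw [← sub_eq_zero, ← abs_eq_zero]
        exact le_antisymm (nonpos_of_mul_nonpos_right hinj S.hκm) (abs_nonneg _)
      rw [ih (by simpa using hlen) (x := S.gW l t) ⟨t, ht, rfl⟩ ⟨t', ht', h0⟩]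

theorem continuousOn_gW (l : List S.A) : ContinuousOn (S.gW l) (Set.Icc S.lo S.hi) := by
  induction l with
  | nil => exact continuousOn_id
  | cons a l ih =>
    exact ContinuousOn.comp (t := Set.Icc S.lo S.hi) (g := S.g a)
      (fun z hz => (S.hderiv a z hz).continuousAt.continuousWithinAt) ih
      fun _ => S.gW_mem l

theorem measurableSet_cyl (l : List S.A) : MeasurableSet (S.cyl l) :=
  (isCompact_Icc.image_of_continuousOn (S.continuousOn_gW l)).measurableSet

theorem exists_append_of_mem_attract {x : ℝ} (hx : x ∈ S.attract) {l : List S.A}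
    (hxl : x ∈ S.cyl l) {N : ℕ} (hN : 1 ≤ N) : ∃ z : List S.A, z.length = N ∧ x ∈ S.cyl (l ++ z) := by
  obtain ⟨a, ha⟩ := Set.mem_iUnion.1 (Set.mem_iInter.1 hx (l.length + N - 1))
  set w := List.ofFn a with hw
  have hwl : w.length = l.length + N := by
    rw [hw, List.length_ofFn]
    omega
  have htake : w.take l.length = l := by
    refine S.eq_of_mem_cyl (x := x) (by simp [hwl]) (S.cyl_append_subset _ (w.drop l.length) ?_) hxl
    rwa [List.take_append_drop]
  refine ⟨w.drop l.length, by simp [hwl], ?_⟩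
  nth_rewrite 1 [← htake]
  rwa [List.take_append_drop]

instance (S : FiniteIFS) : Finite S.A := S.finA

end FiniteIFS

namespace FiniteGibbsIFS

variable (S : FiniteGibbsIFS)

/-- The measure of a cylinder, as a real number. -/
noncomputable def wt (l : List S.A) : ℝ := (S.μ (S.cyl l)).toReal

theorem wt_nonneg (l : List S.A) : 0 ≤ S.wt l := ENNReal.toReal_nonneg

theorem Cstar_pos : 0 < S.Cstar := zero_lt_one.trans_le S.hCstar

theorem Cstar_rpow_le : S.Cstar ^ S.δ ≤ S.Cstar :=
  (Real.rpow_le_rpow_of_exponent_le S.hCstar S.hδ.2.le).trans_eq (Real.rpow_one _)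

theorem wt_append_le (l l' : List S.A) : S.wt (l ++ l') ≤ S.Cstar ^ 4 * (S.wt l * S.wt l') := by
  have hC := S.Cstar_pos
  have hD : ∀ l, 0 ≤ Metric.diam (S.cyl l) ^ S.δ := fun _ => Real.rpow_nonneg Metric.diam_nonneg _
  calc S.wt (l ++ l') ≤ S.Cstar * Metric.diam (S.cyl (l ++ l')) ^ S.δ := (S.hfrostman _).1
    _ ≤ S.Cstar * (S.Cstar * (Metric.diam (S.cyl l) * Metric.diam (S.cyl l'))) ^ S.δ :=
      mul_le_mul_of_nonneg_left
        (Real.rpow_le_rpow Metric.diam_nonneg (S.hmult l l').1 S.hδ.1.le) hC.le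
    _ = S.Cstar * (S.Cstar ^ S.δ *
          (Metric.diam (S.cyl l) ^ S.δ * Metric.diam (S.cyl l') ^ S.δ)) := by
      rw [Real.mul_rpow hC.le (mul_nonneg Metric.diam_nonneg Metric.diam_nonneg),
        Real.mul_rpow Metric.diam_nonneg Metric.diam_nonneg]
    _ ≤ S.Cstar * (S.Cstar * ((S.Cstar * S.wt l) * (S.Cstar * S.wt l'))) := by
      refine mul_le_mul_of_nonneg_left (mul_le_mul S.Cstar_rpow_le ?_ ?_ hC.le) hC.le
      · exact mul_le_mul (S.hfrostman l).2 (S.hfrostman l').2 (hD _)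
          (mul_nonneg hC.le (S.wt_nonneg l))
      · exact mul_nonneg (hD _) (hD _)
    _ = _ := by ring

theorem wt_mul_wt_le (l l' : List S.A) : S.wt l * S.wt l' ≤ S.Cstar ^ 4 * S.wt (l ++ l') := by
  have hC := S.Cstar_pos
  have hD : ∀ l, 0 ≤ Metric.diam (S.cyl l) ^ S.δ := fun _ => Real.rpow_nonneg Metric.diam_nonneg _
  calc S.wt l * S.wt l'
      ≤ (S.Cstar * Metric.diam (S.cyl l) ^ S.δ) * (S.Cstar * Metric.diam (S.cyl l') ^ S.δ) :=
      mul_le_mul (S.hfrostman l).1 (S.hfrostman l').1 (S.wt_nonneg l') (mul_nonneg hC.le (hD l))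
    _ = S.Cstar ^ 2 * (Metric.diam (S.cyl l) * Metric.diam (S.cyl l')) ^ S.δ := by
      rw [Real.mul_rpow Metric.diam_nonneg Metric.diam_nonneg]
      ring
    _ ≤ S.Cstar ^ 2 * (S.Cstar * Metric.diam (S.cyl (l ++ l'))) ^ S.δ :=
      mul_le_mul_of_nonneg_left
        (Real.rpow_le_rpow (mul_nonneg Metric.diam_nonneg Metric.diam_nonneg) (S.hmult l l').2
          S.hδ.1.le) (sq_nonneg _)
    _ = S.Cstar ^ 2 * (S.Cstar ^ S.δ * Metric.diam (S.cyl (l ++ l')) ^ S.δ) := by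
      rw [Real.mul_rpow hC.le Metric.diam_nonneg]
    _ ≤ S.Cstar ^ 2 * (S.Cstar * (S.Cstar * S.wt (l ++ l'))) :=
      mul_le_mul_of_nonneg_left
        (mul_le_mul S.Cstar_rpow_le (S.hfrostman _).2 (hD _) hC.le) (sq_nonneg _)
    _ = _ := by ring

theorem le_diam_cyl_rpow {l : List S.A} {n : ℕ} (hl : l.length ≤ n) :
    (S.κm ^ n * (S.hi - S.lo)) ^ S.δ ≤ Metric.diam (S.cyl l) ^ S.δ := by
  have h0 : 0 ≤ S.hi - S.lo := sub_nonneg.2 S.hlohi.le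
  refine Real.rpow_le_rpow (mul_nonneg (pow_nonneg S.hκm.le _) h0) ?_ S.hδ.1.le
  refine le_trans ?_ (S.le_diam_cyl l)
  exact mul_le_mul_of_nonneg_right
    (pow_le_pow_of_le_one S.hκm.le S.κm_lt_one.le hl) h0

theorem sum_wt_le_one (n : ℕ) : ∑ l ∈ words S.A n, S.wt l ≤ 1 := by
  have := S.hprob
  have hdisj : (words S.A n : Set (List S.A)).PairwiseDisjoint S.cyl := by
    intro l hl l' hl' hne
    rw [Finset.mem_coe, mem_words] at hl hl'
    exact Set.disjoint_left.2 fun x hx hx' => hne (S.eq_of_mem_cyl (hl.trans hl'.symm) hx hx')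
  have h := measure_biUnion_finset (μ := S.μ) hdisj fun l _ => S.measurableSet_cyl l
  have h1 : ∑ l ∈ words S.A n, S.wt l = (∑ l ∈ words S.A n, S.μ (S.cyl l)).toReal :=
    (ENNReal.toReal_sum fun l _ => measure_ne_top _ _).symm
  rw [h1, ← h]
  exact ENNReal.toReal_mono ENNReal.one_ne_top prob_le_one

/-- Every child carries a definite proportion of the mass of its parent, both when words are read
forwards and when they are read backwards. -/
theorem exists_child_proportion (N : ℕ) : ∃ p ∈ Set.Ioo (0 : ℝ) 1,
    (∀ d r, ∀ z ∈ words S.A N,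
      p * mass S.wt Set.univ d (N + r) ≤ mass S.wt Set.univ (d ++ z) r) ∧
    ∀ d r, ∀ z ∈ words S.A N, p * mass (fun l => S.wt l.reverse) Set.univ d (N + r)
      ≤ mass (fun l => S.wt l.reverse) Set.univ (d ++ z) r := by
  have hC := S.Cstar_pos
  set K := S.Cstar ^ 4 with hK
  have hK0 : 0 < K := pow_pos hC 4
  set ε := (S.κm ^ N * (S.hi - S.lo)) ^ S.δ / S.Cstar with hε
  have hε0 : 0 < ε := div_pos
    (Real.rpow_pos_of_pos (mul_pos (pow_pos S.hκm _) (sub_pos.2 S.hlohi)) _) hC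
  have hεwt : ∀ l : List S.A, l.length = N → ε ≤ S.wt l := by
    intro l hl
    rw [hε, div_le_iff₀' hC]
    exact (S.le_diam_cyl_rpow hl.le).trans (S.hfrostman l).2
  have hmono : ∀ (q : List S.A → ℝ) (d d' : List S.A) (m m' : ℕ), (∀ l, 0 ≤ q l) →
      ε / K ^ 4 * mass q Set.univ d m ≤ mass q Set.univ d' m' →
      min (1 / 2) (ε / K ^ 4) * mass q Set.univ d m ≤ mass q Set.univ d' m' :=
    fun q d d' m m' hq h =>
      (mul_le_mul_of_nonneg_right (min_le_right _ _) (mass_nonneg hq _ _ _)).trans h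
  refine ⟨min (1 / 2) (ε / K ^ 4), ⟨lt_min (by norm_num) (by positivity),
    (min_le_left _ _).trans_lt (by norm_num)⟩, fun d r z hz => ?_, fun d r z hz => ?_⟩
  · refine hmono _ _ _ _ _ S.wt_nonneg ?_
    exact mul_mass_le_mass_append hK0 S.wt_nonneg S.wt_append_le S.wt_mul_wt_le
      (fun z hz => hεwt z (mem_words.1 hz)) hε0.le (S.sum_wt_le_one N) d r hz
  · refine hmono _ _ _ _ _ (fun l => S.wt_nonneg _) ?_
    refine mul_mass_le_mass_append hK0 (fun l => S.wt_nonneg _) (fun l l' => ?_) (fun l l' => ?_)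
      (fun z hz => hεwt _ (by simpa using hz)) hε0.le ?_ d r hz
    · rw [List.reverse_append, mul_comm (S.wt l.reverse)]
      exact S.wt_append_le _ _
    · rw [List.reverse_append, mul_comm (S.wt l.reverse)]
      exact S.wt_mul_wt_le _ _
    · rw [sum_words_reverse]
      exact S.sum_wt_le_one N

theorem exists_mem_attract : ∃ x, x ∈ S.attract := by
  have := S.hprob
  by_contra! h
  have h1 : S.attractᶜ = Set.univ := Set.eq_univ_of_forall h
  have h2 := S.hsupp
  rw [show S.toFiniteIFS.attractᶜ = Set.univ from h1, measure_univ] at h2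
  exact one_ne_zero h2

theorem measure_inter_attract (s : Set ℝ) : S.μ (s ∩ S.attract) = S.μ s :=
  measure_inter_conull S.hsupp

theorem abs_X_le (l : List S.A) {x y m : ℝ} (hx : x ∈ Set.Icc S.lo S.hi)
    (hy : y ∈ Set.Icc S.lo S.hi) (hm : |x - y| ≤ m) : |S.X l x y| ≤ S.Cstar * m ^ S.δ :=
  (S.hXHolder l x hx y hy).trans <| mul_le_mul_of_nonneg_left
    (Real.rpow_le_rpow (abs_nonneg _) hm S.hδ.1.le) S.Cstar_pos.le

/-- If the temporal distances of `s e c` and `s' f c` from `y` are small at both `x` and `x'`, then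
`X_e - X_f` is small between `g_c x` and `g_c x'`. -/
theorem abs_X_sub_X_le {e f : List S.A} {N : ℕ} (he : e.length = N) (hf : f.length = N)
    (s s' c : List S.A) {x x' y σ m : ℝ} (hx : x ∈ Set.Icc S.lo S.hi)
    (hx' : x' ∈ Set.Icc S.lo S.hi) (hm : |S.gW c x - S.gW c x'| ≤ m)
    (h : |S.Delta (s ++ (e ++ c)) (s' ++ (f ++ c)) x y| ≤ σ)
    (h' : |S.Delta (s ++ (e ++ c)) (s' ++ (f ++ c)) x' y| ≤ σ) :
    |S.X e (S.gW c x) (S.gW c x') - S.X f (S.gW c x) (S.gW c x')|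
      ≤ 2 * σ + 2 * (S.Cstar * (S.κp ^ N * m) ^ S.δ) := by
  have hcx := S.gW_mem c hx
  have hcx' := S.gW_mem c hx'
  have h0 : 0 ≤ S.κp ^ N := pow_nonneg S.κp_pos.le _
  have h1 : |S.X s (S.gW e (S.gW c x)) (S.gW e (S.gW c x'))| ≤ S.Cstar * (S.κp ^ N * m) ^ S.δ := by
    refine S.abs_X_le s (S.gW_mem e hcx) (S.gW_mem e hcx') ?_
    exact he ▸ (S.abs_gW_sub e hcx hcx').2.trans (mul_le_mul_of_nonneg_left hm (he ▸ h0))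
  have h2 : |S.X s' (S.gW f (S.gW c x)) (S.gW f (S.gW c x'))|
      ≤ S.Cstar * (S.κp ^ N * m) ^ S.δ := by
    refine S.abs_X_le s' (S.gW_mem f hcx) (S.gW_mem f hcx') ?_
    exact hf ▸ (S.abs_gW_sub f hcx hcx').2.trans (mul_le_mul_of_nonneg_left hm (hf ▸ h0))
  have h3 : S.Delta (s ++ (e ++ c)) (s' ++ (f ++ c)) x y
      - S.Delta (s ++ (e ++ c)) (s' ++ (f ++ c)) x' y
      = S.X (s ++ (e ++ c)) x x' - S.X (s' ++ (f ++ c)) x x' := by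
    simp only [Delta, FiniteIFS.Delta, X, FiniteIFS.X]
    ring
  have h4 := S.X_append s (e ++ c) hx hx'
  have h5 := S.X_append s' (f ++ c) hx hx'
  rw [S.X_append e c hx hx', S.gW_append, S.gW_append] at h4
  rw [S.X_append f c hx hx', S.gW_append, S.gW_append] at h5
  simp only [X] at h3 ⊢
  rw [h4, h5] at h3
  rw [abs_le] at *
  constructor <;> linarith [h.1, h.2, h'.1, h'.2, h1.1, h1.2, h2.1, h2.2]

theorem exists_missing_child {CM : ℝ} (hCM : 0 < CM) {N : ℕ} (hN : 1 ≤ N) {e f : List S.A}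
    (he : e.length = N) (hf : f.length = N)
    (hnc : ∀ x₀ ∈ S.attract, ∀ u v : ℝ, u ≤ v →
      S.μ {x : ℝ | x ∈ S.attract ∧ S.X e x x₀ - S.X f x x₀ ∈ Set.Icc u v}
        ≤ ENNReal.ofReal (CM * (v - u)))
    (hsmall : 8 * S.Cstar * CM * (2 * S.Cstar + 2 * S.Cstar * (S.Cstar * (S.hi - S.lo)) ^ S.δ)
      * (S.κp ^ N) ^ S.δ ≤ 1)
    (s s' c d : List S.A) {y σ : ℝ} (hσ0 : 0 ≤ σ)
    (hσ : 16 * S.Cstar * CM * σ ≤ (S.κm ^ (c.length + d.length) * (S.hi - S.lo)) ^ S.δ) (r : ℕ) :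
    ∃ z ∈ words S.A N, ∀ t ∈ words S.A r, d ++ z ++ t ∉
      {D | |S.Delta (s ++ (e ++ c)) (s' ++ (f ++ c)) (S.refPt D) y| ≤ σ} := by
  by_contra! hcon
  have := S.hprob
  have hC := S.Cstar_pos
  have hlh : 0 < S.hi - S.lo := sub_pos.2 S.hlohi
  obtain ⟨x₀, hx₀⟩ := S.exists_mem_attract
  have hκ0 : 0 ≤ S.κp ^ N := pow_nonneg S.κp_pos.le _
  set I := Metric.diam (S.cyl (c ++ d)) with hI
  have hI0 : 0 < I := S.diam_cyl_pos _
  set κ := (S.κp ^ N) ^ S.δ with hκ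
  have hκ0' : 0 ≤ κ := Real.rpow_nonneg hκ0 _
  have hIδ : 0 < I ^ S.δ := Real.rpow_pos_of_pos hI0 _
  set P := (S.Cstar * (S.hi - S.lo)) ^ S.δ with hP
  have hP0 : 0 ≤ P := Real.rpow_nonneg (mul_nonneg hC.le hlh.le) _
  set R := 2 * σ + 2 * (S.Cstar * (κ * I ^ S.δ)) + 2 * (S.Cstar * (P * (κ * I ^ S.δ))) with hR
  have hR0 : 0 ≤ R := by positivity
  have hrefJ : ∀ D, S.refPt D ∈ Set.Icc S.lo S.hi := fun D => S.cyl_subset D (S.refPt_mem D)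
  have hω : ∀ z t, S.gW c (S.refPt (d ++ z ++ t)) ∈ S.cyl (c ++ (d ++ z)) := fun z t =>
    S.gW_mem_cyl_append c (S.cyl_append_subset (d ++ z) t (S.refPt_mem _))
  have hω' : ∀ z t, S.gW c (S.refPt (d ++ z ++ t)) ∈ S.cyl (c ++ d) := fun z t =>
    S.cyl_append_subset (c ++ d) z (by rw [List.append_assoc]; exact hω z t)
  obtain ⟨t₁, -, ht₁⟩ := hcon e (mem_words.2 he)
  set ω₁ := S.gW c (S.refPt (d ++ e ++ t₁)) with hω₁
  have hω₁J : ω₁ ∈ Set.Icc S.lo S.hi := S.cyl_subset _ (hω' e t₁)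
  set V := S.X e ω₁ x₀ - S.X f ω₁ x₀ with hV
  have hsub : S.cyl (c ++ d) ∩ S.attract ⊆
      {x : ℝ | x ∈ S.attract ∧ S.X e x x₀ - S.X f x x₀ ∈ Set.Icc (V - R) (V + R)} := by
    rintro x ⟨hx, hxF⟩
    refine ⟨hxF, ?_⟩
    obtain ⟨z, hz, hxz⟩ := S.exists_append_of_mem_attract hxF hx hN
    rw [List.append_assoc] at hxz
    obtain ⟨t, -, ht⟩ := hcon z (mem_words.2 hz)
    set ω := S.gW c (S.refPt (d ++ z ++ t)) with hωd
    have hωJ : ω ∈ Set.Icc S.lo S.hi := S.cyl_subset _ (hω z t)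
    have hxJ : x ∈ Set.Icc S.lo S.hi := S.cyl_subset _ hx
    have h1 := S.abs_X_sub_X_le he hf s s' c (hrefJ _) (hrefJ _)
      (S.abs_sub_le_diam (hω' z t) (hω' e t₁)) ht ht₁
    rw [Real.mul_rpow hκ0 hI0.le] at h1
    have h2 : |x - ω| ≤ S.Cstar * (S.hi - S.lo) * (S.κp ^ N * I) := by
      refine (S.abs_sub_le_diam hxz (hω z t)).trans ?_
      rw [← List.append_assoc]
      refine (S.hmult (c ++ d) z).1.trans ?_
      rw [mul_assoc S.Cstar]
      refine mul_le_mul_of_nonneg_left ?_ hC.le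
      calc I * Metric.diam (S.cyl z) ≤ I * (S.κp ^ N * (S.hi - S.lo)) :=
            mul_le_mul_of_nonneg_left (hz ▸ S.diam_cyl_le z) hI0.le
        _ = _ := by ring
    have h3 : (S.Cstar * (S.hi - S.lo) * (S.κp ^ N * I)) ^ S.δ = P * (κ * I ^ S.δ) := by
      rw [Real.mul_rpow (mul_nonneg hC.le hlh.le) (mul_nonneg hκ0 hI0.le),
        Real.mul_rpow hκ0 hI0.le]
    have h4 := S.abs_X_le e hxJ hωJ h2
    have h5 := S.abs_X_le f hxJ hωJ h2
    rw [h3] at h4 h5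
    have h6 : S.X e x x₀ - S.X f x x₀ - V = (S.X e x ω - S.X f x ω) + (S.X e ω ω₁ - S.X f ω ω₁) := by
      simp only [hV, X, FiniteIFS.X]
      ring
    rw [abs_le] at h1 h4 h5
    constructor <;> linarith [h1.1, h1.2, h4.1, h4.2, h5.1, h5.2]
  have hμ : S.wt (c ++ d) ≤ CM * (2 * R) := by
    have h := (measure_mono hsub).trans (hnc x₀ hx₀ (V - R) (V + R) (by linarith))
    rw [S.measure_inter_attract, show V + R - (V - R) = 2 * R by ring] at h
    exact ENNReal.toReal_le_of_le_ofReal (by positivity) h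
  have hfr : I ^ S.δ ≤ S.Cstar * S.wt (c ++ d) := (S.hfrostman (c ++ d)).2
  have h1 : I ^ S.δ ≤ S.Cstar * (CM * (2 * R)) :=
    hfr.trans (mul_le_mul_of_nonneg_left hμ hC.le)
  have h2 : 16 * S.Cstar * CM * σ ≤ I ^ S.δ :=
    hσ.trans (S.le_diam_cyl_rpow (by rw [List.length_append]))
  have h3 := mul_le_mul_of_nonneg_right hsmall hIδ.le
  rw [hR] at h1
  nlinarith

/-- The words used in the non-linearity condition are different. -/
theorem ne_of_nonconcentration {CM : ℝ} {e f : List S.A}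
    (hnc : ∀ x₀ ∈ S.attract, ∀ u v : ℝ, u ≤ v →
      S.μ {x : ℝ | x ∈ S.attract ∧ S.X e x x₀ - S.X f x x₀ ∈ Set.Icc u v}
        ≤ ENNReal.ofReal (CM * (v - u))) : e ≠ f := by
  rintro rfl
  have := S.hprob
  obtain ⟨x₀, hx₀⟩ := S.exists_mem_attract
  have h := hnc x₀ hx₀ 0 0 le_rfl
  simp only [sub_self, Set.Icc_self, Set.mem_singleton_iff, and_true, mul_zero,
    ENNReal.ofReal_zero, nonpos_iff_eq_zero] at h
  have h1 := S.measure_inter_attract Set.univ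
  rw [Set.univ_inter, measure_univ] at h1
  exact one_ne_zero (h1.symm.trans h)

end FiniteGibbsIFS

/-- Many sets of definite mass in a probability space cannot have very small pairwise
intersections. -/
theorem sq_card_mul_le_of_inter_le {ι κ : Type*} (G : Finset ι) (W : Finset κ) {w : κ → ℝ}
    (hw : ∀ D, 0 ≤ w D) (hsum : ∑ D ∈ W, w D ≤ 1) (B : ι → Set κ) {s η : ℝ} (hs : 0 ≤ s)
    (hη : 0 ≤ η) (hB : ∀ a ∈ G, s ≤ ∑ D ∈ W, (B a).indicator w D)
    (hinter : ∀ a ∈ G, ∀ a' ∈ G, a ≠ a' → ∑ D ∈ W, (B a ∩ B a').indicator w D ≤ η) :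
    (G.card * s) ^ 2 ≤ G.card + (G.card : ℝ) ^ 2 * η := by
  classical
  set h : κ → ℝ := fun D => ∑ a ∈ G, (B a).indicator 1 D with hh
  have h1 : G.card * s ≤ ∑ D ∈ W, w D * h D := by
    calc G.card * s = ∑ a ∈ G, s := by simp
      _ ≤ ∑ a ∈ G, ∑ D ∈ W, (B a).indicator w D := Finset.sum_le_sum hB
      _ = ∑ D ∈ W, w D * h D := by
        rw [Finset.sum_comm]
        refine Finset.sum_congr rfl fun D _ => ?_
        rw [hh, Finset.mul_sum]
        refine Finset.sum_congr rfl fun a _ => ?_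
        by_cases hD : D ∈ B a <;> simp [hD]
  have h2 : (∑ D ∈ W, w D * h D) ^ 2 ≤ (∑ D ∈ W, w D) * ∑ D ∈ W, w D * h D ^ 2 :=
    Finset.sum_sq_le_sum_mul_sum_of_sq_le_mul W (fun D _ => hw D)
      (fun D _ => mul_nonneg (hw D) (sq_nonneg _)) fun D _ =>
        (by ring : (w D * h D) ^ 2 = w D * (w D * h D ^ 2)).le
  have h3 : ∑ D ∈ W, w D * h D ^ 2
      = ∑ a ∈ G, ∑ a' ∈ G, ∑ D ∈ W, (B a ∩ B a').indicator w D := by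
    simp_rw [Finset.sum_comm (s := G) (t := W)]
    refine Finset.sum_congr rfl fun D _ => ?_
    rw [hh, sq, Finset.sum_mul_sum, Finset.mul_sum]
    refine Finset.sum_congr rfl fun a _ => ?_
    rw [Finset.mul_sum]
    refine Finset.sum_congr rfl fun a' _ => ?_
    by_cases hD : D ∈ B a <;> by_cases hD' : D ∈ B a' <;> simp [hD, hD']
  have h4 : ∑ a ∈ G, ∑ a' ∈ G, ∑ D ∈ W, (B a ∩ B a').indicator w D
      ≤ ∑ a ∈ G, ∑ a' ∈ G, ((if a = a' then 1 else 0) + η) := by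
    refine Finset.sum_le_sum fun a ha => Finset.sum_le_sum fun a' ha' => ?_
    split_ifs with haa
    · refine le_add_of_le_of_nonneg (le_trans (Finset.sum_le_sum fun D _ => ?_) hsum) hη
      exact Set.indicator_le_self' (fun _ _ => hw _) _
    · rw [zero_add]
      exact hinter a ha a' ha' haa
  have h5 : ∑ a ∈ G, ∑ a' ∈ G, ((if a = a' then (1 : ℝ) else 0) + η)
      = G.card + (G.card : ℝ) ^ 2 * η := by
    simp only [Finset.sum_add_distrib, Finset.sum_ite_eq, Finset.sum_const, nsmul_eq_mul,
      Finset.sum_ite_mem, Finset.inter_self]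
    ring
  have h6 : 0 ≤ ∑ D ∈ W, w D * h D ^ 2 :=
    Finset.sum_nonneg fun D _ => mul_nonneg (hw D) (sq_nonneg _)
  calc (G.card * s) ^ 2 ≤ (∑ D ∈ W, w D * h D) ^ 2 := pow_le_pow_left₀ (by positivity) h1 2
    _ ≤ _ := h2
    _ ≤ 1 * ∑ D ∈ W, w D * h D ^ 2 := mul_le_mul_of_nonneg_right hsum h6
    _ ≤ G.card + (G.card : ℝ) ^ 2 * η := by
      rw [one_mul, h3, ← h5]
      exact h4

namespace FiniteGibbsIFS

variable (S : FiniteGibbsIFS)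

theorem mass_univ_nil_le_one (n : ℕ) : mass S.wt Set.univ [] n ≤ 1 := by
  simpa [mass] using S.sum_wt_le_one n

theorem mass_reverse_univ_nil_le_one (n : ℕ) :
    mass (fun l => S.wt l.reverse) Set.univ [] n ≤ 1 := by
  have := S.sum_wt_le_one n
  rw [← sum_words_reverse] at this
  simpa [mass] using this

theorem sum_wt_mul_mass_le {N : ℕ} {p q₀ : ℝ} (hp : p ∈ Set.Ioo (0 : ℝ) 1)
    (hq₀ : q₀ ∈ Set.Ioo (0 : ℝ) 1) (hpq : 1 - p = q₀ ^ 4)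
    (hchild : ∀ d r, ∀ z ∈ words S.A N,
      p * mass S.wt Set.univ d (N + r) ≤ mass S.wt Set.univ (d ++ z) r)
    (hchild' : ∀ d r, ∀ z ∈ words S.A N, p * mass (fun l => S.wt l.reverse) Set.univ d (N + r)
      ≤ mass (fun l => S.wt l.reverse) Set.univ (d ++ z) r)
    {e f : List S.A} (he : e.length = N) (hf : f.length = N) (hef : e ≠ f) (k r : ℕ)
    {y σ : ℝ}
    (hmiss : ∀ s s' c d : List S.A, c.length ≤ k * N → d.length ≤ k * N → ∀ r,
      ∃ z ∈ words S.A N, ∀ t ∈ words S.A r, d ++ z ++ t ∉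
        {D | |S.Delta (s ++ (e ++ c)) (s' ++ (f ++ c)) (S.refPt D) y| ≤ σ})
    (b : List S.A) {u v : ℝ} (huv : v - u ≤ σ) :
    ∑ a ∈ words S.A (k * N + r), S.wt a *
        mass S.wt {D | S.Delta a b (S.refPt D) y ∈ Set.Icc u v} [] (k * N + r)
      ≤ 3 * q₀ ^ k := by
  classical
  set n := k * N + r with hn
  set x := q₀ ^ k with hx
  have hx0 : 0 < x := pow_pos hq₀.1 k
  have hx1 : x ≤ 1 := pow_le_one₀ hq₀.1.le hq₀.2.le
  have hx4 : (1 - p) ^ k = x ^ 4 := by rw [hpq, hx, ← pow_mul, ← pow_mul, mul_comm]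
  set B : List S.A → Set (List S.A) := fun a => {D | S.Delta a b (S.refPt D) y ∈ Set.Icc u v}
    with hB
  set q : List S.A → ℝ := fun l => S.wt l.reverse with hq
  have hq0 : ∀ l, 0 ≤ q l := fun l => S.wt_nonneg _
  set T : Set (List S.A) := {l | 2 * x ≤ mass S.wt (B l.reverse) [] n} with hT
  have hBle : ∀ a, mass S.wt (B a) [] n ≤ 1 := fun a =>
    (mass_mono S.wt_nonneg (Set.subset_univ _) _ _).trans (S.mass_univ_nil_le_one n)
  obtain ⟨G, hGT, hGD, hGm⟩ := exists_diverging_family (T := T) (e := e.reverse) (f := f.reverse)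
    hq0 hp.1.le hp.2.le hchild' (by simpa using he) (by simpa using hf)
    (fun h => hef (List.reverse_injective h)) r k []
  have hinter : ∀ l ∈ G, ∀ l' ∈ G, l ≠ l' →
      ∑ D ∈ words S.A n, (B l.reverse ∩ B l'.reverse).indicator S.wt D ≤ x ^ 4 := by
    intro l hl l' hl' hne
    have hbound : ∀ s s' c : List S.A, c.length ≤ k * N →
        mass S.wt {D | |S.Delta (s ++ (e ++ c)) (s' ++ (f ++ c)) (S.refPt D) y| ≤ σ} [] n
          ≤ x ^ 4 := by
      intro s s' c hc
      refine (mass_le_of_missing_child S.wt_nonneg hp.2.le hchild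
        (fun d hd => hmiss s s' c d hc hd) r k [] (by simp)).trans ?_
      rw [hx4]
      exact mul_le_of_le_one_right (by positivity) (S.mass_univ_nil_le_one n)
    have hdiff : ∀ a a' D, D ∈ B a → D ∈ B a' → |S.Delta a a' (S.refPt D) y| ≤ σ := by
      intro a a' D h h'
      have h0 : S.Delta a a' (S.refPt D) y
          = S.Delta a b (S.refPt D) y - S.Delta a' b (S.refPt D) y := by
        simp only [Delta, FiniteIFS.Delta]
        ring
      rw [h0, abs_le]
      constructor <;> linarith [h.1, h.2, h'.1, h'.2]
    have hmass : ∑ D ∈ words S.A n, (B l.reverse ∩ B l'.reverse).indicator S.wt D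
        = mass S.wt (B l.reverse ∩ B l'.reverse) [] n := by simp [mass]
    rw [hmass]
    obtain ⟨c, s, s', hc, ⟨h1, h2⟩ | ⟨h1, h2⟩⟩ := hGD l hl l' hl' hne
    · refine (mass_mono S.wt_nonneg (fun D hD => ?_) _ _).trans
        (hbound s.reverse s'.reverse c.reverse (by simpa using hc))
      have := hdiff _ _ D hD.1 hD.2
      simpa [h1, h2] using this
    · refine (mass_mono S.wt_nonneg (fun D hD => ?_) _ _).trans
        (hbound s'.reverse s.reverse c.reverse (by simpa using hc))
      have := hdiff _ _ D hD.2 hD.1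
      simpa [h1, h2] using this
  have hcs := sq_card_mul_le_of_inter_le G (words S.A n) S.wt_nonneg (S.sum_wt_le_one n)
    (fun l => B l.reverse) (s := 2 * x) (η := x ^ 4) (by positivity) (by positivity)
    (fun l hl => by simpa [mass, hT] using (hGT l hl).1) hinter
  have hTx : mass q T [] n ≤ x := by
    have h1 : mass q T [] n ≤ G.card * x ^ 4 := by
      refine hGm.trans (mul_le_mul_of_nonneg_left ?_ (Nat.cast_nonneg _))
      rw [hx4]
      exact mul_le_of_le_one_right (by positivity) (S.mass_reverse_univ_nil_le_one n)
    have h2 : (G.card : ℝ) * x ^ 2 ≤ 1 := by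
      rcases (Nat.cast_nonneg (α := ℝ) G.card).eq_or_lt with h0 | h0
      · rw [← h0]
        norm_num
      · have h3 : (G.card : ℝ) * x ^ 4 ≤ G.card * x ^ 2 :=
          mul_le_mul_of_nonneg_left (pow_le_pow_of_le_one hx0.le hx1 (by norm_num)) h0.le
        have h4 : (G.card : ℝ) * (4 * (G.card * x ^ 2)) ≤ G.card * (1 + G.card * x ^ 4) := by
          linarith
        have h5 := le_of_mul_le_mul_left h4 h0
        linarith
    have h3 : x ^ 2 ≤ x := by nlinarith
    calc mass q T [] n ≤ G.card * x ^ 2 * x ^ 2 := by linarith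
      _ ≤ 1 * x ^ 2 := mul_le_mul_of_nonneg_right h2 (sq_nonneg x)
      _ ≤ x := by linarith
  calc ∑ a ∈ words S.A n, S.wt a * mass S.wt (B a) [] n
      = ∑ l ∈ words S.A n, q l * mass S.wt (B l.reverse) [] n :=
        (sum_words_reverse (fun a => S.wt a * mass S.wt (B a) [] n) n).symm
    _ ≤ ∑ l ∈ words S.A n, (2 * x * q l + T.indicator q l) := by
        refine Finset.sum_le_sum fun l _ => ?_
        by_cases hl : l ∈ T
        · rw [Set.indicator_of_mem hl]
          have h1 := mul_le_mul_of_nonneg_left (hBle l.reverse) (hq0 l)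
          have h2 := mul_nonneg hx0.le (hq0 l)
          linarith
        · rw [Set.indicator_of_notMem hl, add_zero]
          have hl' : mass S.wt (B l.reverse) [] n ≤ 2 * x := (not_le.1 hl).le
          linarith [mul_le_mul_of_nonneg_left hl' (hq0 l)]
    _ = 2 * x * mass q Set.univ [] n + mass q T [] n := by
        rw [Finset.sum_add_distrib, ← Finset.mul_sum]
        simp [mass]
    _ ≤ 3 * x := by
        have h1 := S.mass_reverse_univ_nil_le_one n
        have h2 := mul_le_mul_of_nonneg_left h1 hx0.le
        linarith

end FiniteGibbsIFS

/-- Optimizing a family of bounds over the number of scales gives a power saving. -/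
theorem exists_exponents_of_forall_scale {c τ q : ℝ} (hc : 0 < c) (hτ : τ ∈ Set.Ioo (0 : ℝ) 1)
    (hq : q ∈ Set.Ioo (0 : ℝ) 1) {N : ℕ} (hN : 1 ≤ N) :
    ∃ ρ ∈ Set.Ioo (0 : ℝ) 1, ∃ Θ ∈ Set.Ioo (0 : ℝ) 1, ∃ CQ : ℝ, 0 < CQ ∧
      ∀ (σ P : ℝ) (n : ℕ), 0 ≤ σ → P ≤ 1 →
        (∀ k, k * N ≤ n → σ ≤ c * τ ^ k → P ≤ 3 * q ^ k) → P ≤ CQ * (σ ^ Θ + ρ ^ n) := by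
  set q' := max q (√τ) with hq'
  have hq'0 : 0 < q' := hq.1.trans_le (le_max_left _ _)
  have hq'1 : q' < 1 := max_lt hq.2 (by rw [Real.sqrt_lt' one_pos]; simpa using hτ.2)
  have hτq' : τ < q' := by
    refine lt_of_lt_of_le ?_ (le_max_right _ _)
    rw [Real.lt_sqrt hτ.1.le]
    nlinarith [hτ.1, hτ.2]
  have hlogτ : Real.log τ < 0 := Real.log_neg hτ.1 hτ.2
  set Θ := Real.log q' / Real.log τ with hΘ
  have hΘ0 : 0 < Θ := div_pos_of_neg_of_neg (Real.log_neg hq'0 hq'1) hlogτ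
  have hΘ1 : Θ < 1 := by
    rw [hΘ, div_lt_one_of_neg hlogτ]
    exact Real.log_lt_log hτ.1 hτq'
  have hτΘ : τ ^ Θ = q' := by
    rw [Real.rpow_def_of_pos hτ.1, hΘ, mul_div_cancel₀ _ hlogτ.ne, Real.exp_log hq'0]
  have hN0 : (0 : ℝ) < N := by exact_mod_cast hN
  set ρ := q' ^ ((1 : ℝ) / N) with hρ
  have hρ0 : 0 < ρ := Real.rpow_pos_of_pos hq'0 _
  have hρ1 : ρ < 1 := Real.rpow_lt_one hq'0.le hq'1 (by positivity)
  have hρN : ρ ^ N = q' := by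
    rw [hρ, ← Real.rpow_natCast, ← Real.rpow_mul hq'0.le, one_div_mul_cancel hN0.ne', Real.rpow_one]
  have hA : 3 ≤ 3 / q' := by
    rw [le_div_iff₀ hq'0]
    linarith
  have hcΘ : 0 < (c ^ Θ)⁻¹ := inv_pos.2 (Real.rpow_pos_of_pos hc _)
  refine ⟨ρ, ⟨hρ0, hρ1⟩, Θ, ⟨hΘ0, hΘ1⟩, 3 / q' * (1 + (c ^ Θ)⁻¹), by positivity, ?_⟩
  intro σ P n hσ hP hk
  have hk' : ∀ k, k * N ≤ n → σ ≤ c * τ ^ k → P ≤ 3 / q' * q' ^ (k + 1) := by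
    intro k h1 h2
    have h3 : q ^ k ≤ q' ^ k := pow_le_pow_left₀ hq.1.le (le_max_left _ _) k
    have h4 : 3 / q' * q' ^ (k + 1) = 3 * q' ^ k := by
      rw [pow_succ]
      field_simp
    rw [h4]
    linarith [hk k h1 h2]
  have hσΘ : 0 ≤ σ ^ Θ := Real.rpow_nonneg hσ _
  have hρn : 0 < ρ ^ n := pow_pos hρ0 n
  have key : P ≤ 3 / q' * ρ ^ n ∨ P ≤ 3 / q' * ((c ^ Θ)⁻¹ * σ ^ Θ) := by
    by_cases hcase : ∃ k, k * N ≤ n ∧ c * τ ^ k < σ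
    · right
      classical
      have hdiv : (c ^ Θ)⁻¹ * σ ^ Θ = (σ / c) ^ Θ := by
        rw [Real.div_rpow hσ hc.le, div_eq_inv_mul]
      rw [hdiv]
      obtain ⟨h1, h2⟩ := Nat.find_spec hcase
      have hmin := fun m hm => Nat.find_min hcase (m := m) hm
      generalize Nat.find hcase = k at h1 h2 hmin
      have h3 : τ ^ k ≤ σ / c := by
        rw [le_div_iff₀ hc]
        linarith
      have h4 : q' ^ k ≤ (σ / c) ^ Θ := by
        have := Real.rpow_le_rpow (pow_nonneg hτ.1.le k) h3 hΘ0.le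
        rwa [← Real.rpow_natCast, ← Real.rpow_mul hτ.1.le, mul_comm, Real.rpow_mul hτ.1.le, hτΘ,
          Real.rpow_natCast] at this
      refine le_trans ?_ (mul_le_mul_of_nonneg_left h4 (by positivity))
      rcases k with _ | j
      · rw [pow_zero]
        linarith
      · have hj : j * N ≤ n := le_trans (Nat.mul_le_mul_right _ (Nat.le_succ j)) h1
        refine hk' j hj (not_lt.1 fun h => hmin j (Nat.lt_succ_self j) ⟨hj, h⟩)
    · left
      push Not at hcase
      have h1 : n / N * N ≤ n := Nat.div_mul_le_self n N
      refine (hk' _ h1 (hcase _ h1)).trans (mul_le_mul_of_nonneg_left ?_ (by positivity))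
      rw [← hρN, ← pow_mul]
      refine pow_le_pow_of_le_one hρ0.le hρ1.le ?_
      exact (Nat.lt_mul_div_succ n hN).le
  have hA0 : 0 < 3 / q' := by positivity
  have e1 : 3 / q' * (1 + (c ^ Θ)⁻¹) * (σ ^ Θ + ρ ^ n) = 3 / q' * ρ ^ n
      + 3 / q' * ((c ^ Θ)⁻¹ * σ ^ Θ) + (3 / q' * σ ^ Θ + 3 / q' * ((c ^ Θ)⁻¹ * ρ ^ n)) := by ring
  have e2 : 0 ≤ 3 / q' * σ ^ Θ + 3 / q' * ((c ^ Θ)⁻¹ * ρ ^ n) := by positivity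
  have e3 : 0 ≤ 3 / q' * ρ ^ n := by positivity
  have e4 : 0 ≤ 3 / q' * ((c ^ Θ)⁻¹ * σ ^ Θ) := by positivity
  rw [e1]
  rcases key with h | h <;> linarith

namespace FiniteGibbsIFS

variable (S : FiniteGibbsIFS)

/-- The real-valued form of the four-fold sum in the quantitative non-linearity condition. -/
noncomputable def concentration (u v : ℝ) (n : ℕ) : ℝ :=
  ∑ b ∈ words S.A n, ∑ d ∈ words S.A n, S.wt b * S.wt d * ∑ a ∈ words S.A n, S.wt a *
    mass S.wt {D | S.Delta a b (S.refPt D) (S.refPt d) ∈ Set.Icc u v} [] n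

theorem concentration_le {u v : ℝ} {n : ℕ} {M : ℝ} (hM0 : 0 ≤ M)
    (hM : ∀ b d : List S.A, ∑ a ∈ words S.A n, S.wt a *
      mass S.wt {D | S.Delta a b (S.refPt D) (S.refPt d) ∈ Set.Icc u v} [] n ≤ M) :
    S.concentration u v n ≤ M := by
  have h0 : 0 ≤ ∑ d ∈ words S.A n, S.wt d := Finset.sum_nonneg fun _ _ => S.wt_nonneg _
  calc S.concentration u v n
      ≤ ∑ b ∈ words S.A n, ∑ d ∈ words S.A n, S.wt b * S.wt d * M :=
        Finset.sum_le_sum fun b _ => Finset.sum_le_sum fun d _ =>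
          mul_le_mul_of_nonneg_left (hM b d) (mul_nonneg (S.wt_nonneg b) (S.wt_nonneg d))
    _ = (∑ b ∈ words S.A n, S.wt b) * (∑ d ∈ words S.A n, S.wt d) * M := by
        rw [Finset.sum_mul_sum, Finset.sum_mul]
        exact Finset.sum_congr rfl fun b _ => (Finset.sum_mul _ _ _).symm
    _ ≤ 1 * M := mul_le_mul_of_nonneg_right
        (mul_le_one₀ (S.sum_wt_le_one n) h0 (S.sum_wt_le_one n)) hM0
    _ = M := one_mul M

theorem tsum_eq_ofReal_concentration (u v : ℝ) (n : ℕ) :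
    ∑' q : (Fin n → S.A) × (Fin n → S.A) × (Fin n → S.A) × (Fin n → S.A),
      (S.μ (S.cyl (List.ofFn q.1)) * S.μ (S.cyl (List.ofFn q.2.1)) *
          S.μ (S.cyl (List.ofFn q.2.2.1)) * S.μ (S.cyl (List.ofFn q.2.2.2))) *
        Set.indicator (Set.Icc u v) (fun _ => (1 : ℝ≥0∞))
          (S.Delta (List.ofFn q.1) (List.ofFn q.2.1)
            (S.refPt (List.ofFn q.2.2.1)) (S.refPt (List.ofFn q.2.2.2)))
      = ENNReal.ofReal (S.concentration u v n) := by
  classical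
  have := S.hprob
  have := Fintype.ofFinite S.A
  set W : List S.A → List S.A → List S.A → List S.A → ℝ := fun a b c d =>
    S.wt a * S.wt b * S.wt c * S.wt d *
      (Set.Icc u v).indicator (fun _ => (1 : ℝ)) (S.Delta a b (S.refPt c) (S.refPt d)) with hW
  have hW0 : ∀ a b c d, 0 ≤ W a b c d := fun a b c d => mul_nonneg
    (mul_nonneg (mul_nonneg (mul_nonneg (S.wt_nonneg a) (S.wt_nonneg b)) (S.wt_nonneg c))
      (S.wt_nonneg d)) (Set.indicator_nonneg (fun _ _ => zero_le_one) _)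
  have hμ : ∀ l, S.μ (S.cyl l) = ENNReal.ofReal (S.wt l) := fun l =>
    (ENNReal.ofReal_toReal (measure_ne_top _ _)).symm
  have hterm : ∀ a b c d, (S.μ (S.cyl a) * S.μ (S.cyl b) * S.μ (S.cyl c) * S.μ (S.cyl d)) *
      Set.indicator (Set.Icc u v) (fun _ => (1 : ℝ≥0∞)) (S.Delta a b (S.refPt c) (S.refPt d))
      = ENNReal.ofReal (W a b c d) := by
    intro a b c d
    have ha := S.wt_nonneg a
    have hb := S.wt_nonneg b
    have hc := S.wt_nonneg c
    rw [hμ, hμ, hμ, hμ, ← ENNReal.ofReal_mul ha, ← ENNReal.ofReal_mul (mul_nonneg ha hb),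
      ← ENNReal.ofReal_mul (mul_nonneg (mul_nonneg ha hb) hc)]
    by_cases h : S.Delta a b (S.refPt c) (S.refPt d) ∈ Set.Icc u v <;> simp [hW, h]
  have hsum : S.concentration u v n = ∑ a ∈ words S.A n, ∑ b ∈ words S.A n, ∑ c ∈ words S.A n,
      ∑ d ∈ words S.A n, W a b c d := by
    have hmass : ∀ a b d, mass S.wt {D | S.Delta a b (S.refPt D) (S.refPt d) ∈ Set.Icc u v} [] n
        = ∑ c ∈ words S.A n, S.wt c *
          (Set.Icc u v).indicator (fun _ => (1 : ℝ)) (S.Delta a b (S.refPt c) (S.refPt d)) := by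
      intro a b d
      refine Finset.sum_congr rfl fun c _ => ?_
      by_cases h : S.Delta a b (S.refPt c) (S.refPt d) ∈ Set.Icc u v
      · rw [Set.indicator_of_mem h, mul_one]
        exact Set.indicator_of_mem (f := S.wt)
          (s := {D | S.Delta a b (S.refPt D) (S.refPt d) ∈ Set.Icc u v}) h
      · rw [Set.indicator_of_notMem h, mul_zero]
        exact Set.indicator_of_notMem (f := S.wt)
          (s := {D | S.Delta a b (S.refPt D) (S.refPt d) ∈ Set.Icc u v}) h
    calc S.concentration u v n = ∑ b ∈ words S.A n, ∑ d ∈ words S.A n, ∑ a ∈ words S.A n,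
          ∑ c ∈ words S.A n, W a b c d := by
          refine Finset.sum_congr rfl fun b _ => Finset.sum_congr rfl fun d _ => ?_
          rw [Finset.mul_sum]
          refine Finset.sum_congr rfl fun a _ => ?_
          rw [hmass, Finset.mul_sum, Finset.mul_sum]
          refine Finset.sum_congr rfl fun c _ => ?_
          simp only [hW]
          ring
      _ = ∑ b ∈ words S.A n, ∑ a ∈ words S.A n, ∑ c ∈ words S.A n,
          ∑ d ∈ words S.A n, W a b c d := by
          refine Finset.sum_congr rfl fun b _ => ?_
          rw [Finset.sum_comm]
          exact Finset.sum_congr rfl fun a _ => Finset.sum_comm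
      _ = _ := Finset.sum_comm
  rw [tsum_fintype, hsum]
  simp only [hterm]
  rw [← ENNReal.ofReal_sum_of_nonneg fun q _ => hW0 _ _ _ _]
  simp only [sum_words_eq_sum_ofFn, Fintype.sum_prod_type]

theorem exists_concentration_le {CM : ℝ} (hCM : 0 < CM) (hMNL : S.MNL CM) :
    ∃ N : ℕ, 1 ≤ N ∧ ∃ c : ℝ, 0 < c ∧ ∃ τ ∈ Set.Ioo (0 : ℝ) 1, ∃ q₀ ∈ Set.Ioo (0 : ℝ) 1,
      ∀ (u v : ℝ) (n : ℕ), u ≤ v → ∀ k, k * N ≤ n → v - u ≤ c * τ ^ k →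
        S.concentration u v n ≤ 3 * q₀ ^ k := by
  have hC := S.Cstar_pos
  have hlh : 0 < S.hi - S.lo := sub_pos.2 S.hlohi
  have hκp := S.κp_pos
  set K₁ := 8 * S.Cstar * CM *
    (2 * S.Cstar + 2 * S.Cstar * (S.Cstar * (S.hi - S.lo)) ^ S.δ) with hK₁
  have hK₁0 : 0 < K₁ := by
    have : 0 ≤ (S.Cstar * (S.hi - S.lo)) ^ S.δ := Real.rpow_nonneg (by positivity) _
    positivity
  have hκδ : S.κp ^ S.δ < 1 := Real.rpow_lt_one hκp.le S.hκp S.hδ.1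
  obtain ⟨M, hM⟩ := exists_pow_lt_of_lt_one (inv_pos.2 hK₁0) hκδ
  set N := M + 1 with hN
  have hN1 : 1 ≤ N := Nat.le_add_left 1 M
  have hpow : ∀ {x : ℝ} (m : ℕ), 0 ≤ x → (x ^ m) ^ S.δ = (x ^ S.δ) ^ m := fun m hx => by
    rw [← Real.rpow_natCast, ← Real.rpow_natCast, ← Real.rpow_mul hx, ← Real.rpow_mul hx, mul_comm]
  have hsmall : K₁ * (S.κp ^ N) ^ S.δ ≤ 1 := by
    rw [hpow N hκp.le]
    have h0 : 0 ≤ S.κp ^ S.δ := Real.rpow_nonneg hκp.le _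
    have h1 : (S.κp ^ S.δ) ^ N ≤ K₁⁻¹ :=
      (pow_le_pow_of_le_one h0 hκδ.le (Nat.le_succ M)).trans hM.le
    calc K₁ * (S.κp ^ S.δ) ^ N ≤ K₁ * K₁⁻¹ := mul_le_mul_of_nonneg_left h1 hK₁0.le
      _ = 1 := mul_inv_cancel₀ hK₁0.ne'
  obtain ⟨a, b, hnc⟩ := hMNL N hN1
  have hef := S.ne_of_nonconcentration hnc
  obtain ⟨p, hp, hchild, hchild'⟩ := S.exists_child_proportion N
  have hκm0 : 0 < S.κm ^ S.δ := Real.rpow_pos_of_pos S.hκm _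
  have hκm1 : S.κm ^ S.δ < 1 := Real.rpow_lt_one S.hκm.le S.κm_lt_one S.hδ.1
  set q₀ := (1 - p) ^ ((1 : ℝ) / 4) with hq₀
  have hp1 : 0 < 1 - p := sub_pos.2 hp.2
  have hq₀4 : 1 - p = q₀ ^ 4 := by
    rw [hq₀, ← Real.rpow_natCast, ← Real.rpow_mul hp1.le]
    norm_num
  have hq₀m : q₀ ∈ Set.Ioo (0 : ℝ) 1 :=
    ⟨Real.rpow_pos_of_pos hp1 _, Real.rpow_lt_one hp1.le (by linarith [hp.1]) (by norm_num)⟩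
  refine ⟨N, hN1, (S.hi - S.lo) ^ S.δ / (16 * S.Cstar * CM),
    div_pos (Real.rpow_pos_of_pos hlh _) (by positivity), (S.κm ^ S.δ) ^ (2 * N),
    ⟨pow_pos hκm0 _, pow_lt_one₀ hκm0.le hκm1 (by omega)⟩, q₀, hq₀m, ?_⟩
  intro u v n huv k hk hvu
  obtain ⟨r, rfl⟩ := Nat.exists_eq_add_of_le hk
  refine S.concentration_le (mul_nonneg (by norm_num) (pow_nonneg hq₀m.1.le k)) fun b' d' => ?_
  refine S.sum_wt_mul_mass_le hp hq₀m hq₀4 hchild hchild' (List.length_ofFn) (List.length_ofFn)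
    hef k r (fun s s' c d hc hd r' => ?_) b' le_rfl
  refine S.exists_missing_child hCM hN1 List.length_ofFn List.length_ofFn hnc hsmall s s' c d
    (sub_nonneg.2 huv) ?_ r'
  have h1 : (S.κm ^ S.δ) ^ ((2 * N) * k) ≤ (S.κm ^ S.δ) ^ (c.length + d.length) :=
    pow_le_pow_of_le_one hκm0.le hκm1.le (by nlinarith)
  rw [Real.mul_rpow (pow_nonneg S.hκm.le _) hlh.le, hpow _ S.hκm.le]
  calc 16 * S.Cstar * CM * (v - u)
      ≤ 16 * S.Cstar * CM * ((S.hi - S.lo) ^ S.δ / (16 * S.Cstar * CM) *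
          ((S.κm ^ S.δ) ^ (2 * N)) ^ k) := mul_le_mul_of_nonneg_left hvu (by positivity)
    _ = (S.κm ^ S.δ) ^ ((2 * N) * k) * (S.hi - S.lo) ^ S.δ := by
        rw [pow_mul _ (2 * N) k]
        field_simp
    _ ≤ _ := mul_le_mul_of_nonneg_right h1 (Real.rpow_nonneg hlh.le _)

theorem concentration_le_one (u v : ℝ) (n : ℕ) : S.concentration u v n ≤ 1 := by
  refine S.concentration_le zero_le_one fun b d => le_trans ?_ (S.sum_wt_le_one n)
  exact Finset.sum_le_sum fun a _ => mul_le_of_le_one_right (S.wt_nonneg a)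
    ((mass_mono S.wt_nonneg (Set.subset_univ _) _ _).trans (S.mass_univ_nil_le_one n))

end FiniteGibbsIFS

/-- **(MNL) implies (QNL)** (Theorem 1.2, MNL part).

In the finite fully-branched `C^{1+α}` IFS setting with its dimension-`δ` Gibbs measure
`μ`, if the Measure Non-Linearity condition (MNL) holds, then Quantitative Non-Linearity
holds: there are `ρ, Θ ∈ (0,1)` and `C_QNL > 0` such that for every interval `I ⊆ ℝ`
and every `n ≥ 1`,
`Σ_{a,b,c,d∈𝒜ⁿ} μ(I_a)μ(I_b)μ(I_c)μ(I_d) 1_I(Δ_n((a,x_c),(b,x_d))) ≤ C_QNL(|I|^Θ + ρⁿ)`. -/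
theorem QNL_of_MNL (S : FiniteGibbsIFS) (CM : ℝ) (hCM : 0 < CM) (hMNL : S.MNL CM) :
    ∃ ρ ∈ Set.Ioo (0:ℝ) 1, ∃ Θ ∈ Set.Ioo (0:ℝ) 1, ∃ CQ : ℝ, 0 < CQ ∧
      ∀ u v : ℝ, u ≤ v → ∀ n : ℕ, 1 ≤ n →
        ∑' q : (Fin n → S.A) × (Fin n → S.A) × (Fin n → S.A) × (Fin n → S.A),
          (S.μ (S.cyl (List.ofFn q.1)) * S.μ (S.cyl (List.ofFn q.2.1)) *
              S.μ (S.cyl (List.ofFn q.2.2.1)) * S.μ (S.cyl (List.ofFn q.2.2.2))) *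
            Set.indicator (Set.Icc u v) (fun _ => (1 : ℝ≥0∞))
              (S.Delta (List.ofFn q.1) (List.ofFn q.2.1)
                (S.refPt (List.ofFn q.2.2.1)) (S.refPt (List.ofFn q.2.2.2)))
        ≤ ENNReal.ofReal (CQ * ((v - u) ^ Θ + ρ ^ n)) := by
  obtain ⟨N, hN, c, hc, τ, hτ, q₀, hq₀, h⟩ := S.exists_concentration_le hCM hMNL
  obtain ⟨ρ, hρ, Θ, hΘ, CQ, hCQ, hbound⟩ := exists_exponents_of_forall_scale hc hτ hq₀ hN
  refine ⟨ρ, hρ, Θ, hΘ, CQ, hCQ, fun u v huv n _ => ?_⟩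
  rw [S.tsum_eq_ofReal_concentration]
  exact ENNReal.ofReal_le_ofReal
    (hbound _ _ _ (sub_nonneg.2 huv) (S.concentration_le_one u v n) (h u v n huv))
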